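/- Assume 𝒞 is Fatou closed. The following are equivalent: (a) every bounded measurable X : Ω → ℝ with X ≥ 0 q.s. that belongs to 𝒞̃_λ for some λ ≥ 0 is q.s. equal to 0; (b) ρ_{𝒞̃_λ}(ξ) > 0 for every λ ≥ 0 and every bounded measurable ξ : Ω → ℝ with ξ ≥ 0 q.s. and ξ not q.s. equal to 0; (c) ρ_{𝒞̃_λ}(1_A) > 0 for every λ ≥ 0 and every A ∈ ℱ that is not 𝒫-polar. -/

import Mathlib

open MeasureTheory Filter Topology

namespace Paper

variable {Ω : Type*} [MeasurableSpace Ω]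

/-- `N` is a `Ps`-polar set: it is contained in a measurable set which is null
for every measure in `Ps`. -/
def Polar (Ps : Set (Measure Ω)) (N : Set Ω) : Prop :=
  ∃ N' : Set Ω, MeasurableSet N' ∧ N ⊆ N' ∧ ∀ P ∈ Ps, P N' = 0

/-- `X ≤ Y` holds `Ps`-quasi surely. -/
def LeQS (Ps : Set (Measure Ω)) (X Y : Ω → ℝ) : Prop :=
  Polar Ps {ω | ¬ X ω ≤ Y ω}

/-- `X = Y` holds `Ps`-quasi surely. -/
def EqQS (Ps : Set (Measure Ω)) (X Y : Ω → ℝ) : Prop :=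
  Polar Ps {ω | X ω ≠ Y ω}

/-- The set of quasi-sure bounds of `X` relative to the weight `W`:
all `m ≥ 0` such that `|X| ≤ m • W` quasi surely. -/
def Bounds (Ps : Set (Measure Ω)) (W X : Ω → ℝ) : Set ℝ :=
  {m | 0 ≤ m ∧ Polar Ps {ω | m * W ω < |X ω|}}

/-- Membership in the space `L^W`. -/
def MemLW (Ps : Set (Measure Ω)) (W X : Ω → ℝ) : Prop :=
  Measurable X ∧ (Bounds Ps W X).Nonempty

/-- The norm `‖X‖_W` (for `W = 1` this is the quasi-sure sup-norm `‖·‖_{Ps,∞}`). -/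
noncomputable def normW (Ps : Set (Measure Ω)) (W X : Ω → ℝ) : ℝ :=
  sInf (Bounds Ps W X)

/-- `Kc` is a convex cone of measurable functions containing `0`. -/
def IsConvexCone (Kc : Set (Ω → ℝ)) : Prop :=
  (∀ k ∈ Kc, Measurable k) ∧ (fun _ => (0 : ℝ)) ∈ Kc ∧
  (∀ k ∈ Kc, ∀ c : ℝ, 0 ≤ c → (fun ω => c * k ω) ∈ Kc) ∧
  (∀ k₁ ∈ Kc, ∀ k₂ ∈ Kc, (fun ω => k₁ ω + k₂ ω) ∈ Kc)

/-- `Kc_λ`: the elements of `Kc` bounded below by `-λ • W` quasi surely. -/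
def Klam (Ps : Set (Measure Ω)) (W : Ω → ℝ) (Kc : Set (Ω → ℝ)) (l : ℝ) : Set (Ω → ℝ) :=
  {k ∈ Kc | LeQS Ps (fun ω => -l * W ω) k}

/-- The cone `𝒞` of claims super-replicable at zero cost. -/
def coneC (Ps : Set (Measure Ω)) (W : Ω → ℝ) (Kc : Set (Ω → ℝ)) : Set (Ω → ℝ) :=
  {X | MemLW Ps W X ∧ ∃ k ∈ Kc, LeQS Ps X k}

/-- The set `𝒞_λ`. -/
def coneCLam (Ps : Set (Measure Ω)) (W : Ω → ℝ) (Kc : Set (Ω → ℝ)) (l : ℝ) : Set (Ω → ℝ) :=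
  {X | MemLW Ps W X ∧ ∃ k ∈ Klam Ps W Kc l, LeQS Ps X k}

/-- The sensitive cone `𝒞̃`. -/
def coneCTilde (Ps : Set (Measure Ω)) (W : Ω → ℝ) (Kc : Set (Ω → ℝ)) : Set (Ω → ℝ) :=
  {X | MemLW Ps W X ∧ ∀ P ∈ Ps, ∃ k ∈ Kc, ∀ᵐ ω ∂P, X ω ≤ k ω}

/-- The sensitive set `𝒞̃_λ`. -/
def coneCTildeLam (Ps : Set (Measure Ω)) (W : Ω → ℝ) (Kc : Set (Ω → ℝ)) (l : ℝ) :
    Set (Ω → ℝ) :=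
  {X | MemLW Ps W X ∧ ∀ P ∈ Ps, ∃ k ∈ Klam Ps W Kc l, ∀ᵐ ω ∂P, X ω ≤ k ω}

/-- `𝒞̂ = ⋃_{λ ≥ 0} 𝒞̃_λ`. -/
def coneCHat (Ps : Set (Measure Ω)) (W : Ω → ℝ) (Kc : Set (Ω → ℝ)) : Set (Ω → ℝ) :=
  ⋃ l ∈ {r : ℝ | 0 ≤ r}, coneCTildeLam Ps W Kc l

/-- A set `A ⊆ L^W` is Fatou closed: it is stable under quasi-sure limits of
`‖·‖_W`-bounded sequences. -/
def FatouClosed (Ps : Set (Measure Ω)) (W : Ω → ℝ) (A : Set (Ω → ℝ)) : Prop :=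
  ∀ X : ℕ → Ω → ℝ, (∀ n, X n ∈ A) → (∃ m : ℝ, ∀ n, m ∈ Bounds Ps W (X n)) →
    ∀ Y : Ω → ℝ, MemLW Ps W Y →
      Polar Ps {ω | ¬ Tendsto (fun n => X n ω) atTop (nhds (Y ω))} → Y ∈ A

/-- Bounded measurable real-valued function. -/
def BddMeas (X : Ω → ℝ) : Prop := Measurable X ∧ ∃ c : ℝ, ∀ ω, |X ω| ≤ c

/-- sensitive No Free Lunch with Vanishing Risk: any quasi-surely nonnegative
bounded measurable `ξ` which is a `‖·‖_{Ps,∞}`-limit of elements of `𝒞̃ ∩ L^∞`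
vanishes quasi surely. -/
def sNFLVR (Ps : Set (Measure Ω)) (W : Ω → ℝ) (Kc : Set (Ω → ℝ)) : Prop :=
  ∀ ξ : Ω → ℝ, BddMeas ξ → LeQS Ps (fun _ => 0) ξ →
    (∃ X : ℕ → Ω → ℝ,
      (∀ n, X n ∈ coneCTilde Ps W Kc ∧ MemLW Ps (fun _ => 1) (X n)) ∧
      Tendsto (fun n => normW Ps (fun _ => 1) (fun ω => X n ω - ξ ω)) atTop (nhds 0)) →
    EqQS Ps ξ (fun _ => 0)

/-- No Arbitrage for the cone `Kc`. -/
def NA (Ps : Set (Measure Ω)) (Kc : Set (Ω → ℝ)) : Prop :=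
  ∀ k ∈ Kc, LeQS Ps (fun _ => 0) k → EqQS Ps k (fun _ => 0)

/-- `Ps_W`: probability measures dominated by some member of `Ps` and integrating `W`. -/
def PW (Ps : Set (Measure Ω)) (W : Ω → ℝ) : Set (Measure Ω) :=
  {Q | IsProbabilityMeasure Q ∧ (∃ P ∈ Ps, Q ≪ P) ∧ Integrable W Q}

/-- An approximate separating class `(Q_n)_{n ≥ 1}`. -/
def ApproxSep (Ps : Set (Measure Ω)) (W : Ω → ℝ) (Kc : Set (Ω → ℝ))
    (Q : ℕ → Measure Ω) : Prop :=
  (∀ n : ℕ, 1 ≤ n → Q n ∈ PW Ps W) ∧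
  (∃ Pbar ∈ Ps, ∀ n : ℕ, 1 ≤ n → Q n ≪ Pbar) ∧
  (∀ n : ℕ, 1 ≤ n → ∀ X ∈ coneCLam Ps W Kc (n : ℝ), ∫ ω, X ω ∂(Q n) ≤ 1 / (n : ℝ))

/-- `Q_app ≈ Ps` : the approximate separating classes and `Ps` share the same
polar sets. -/
def QappEquivP (Ps : Set (Measure Ω)) (W : Ω → ℝ) (Kc : Set (Ω → ℝ)) : Prop :=
  ∀ A : Set Ω, MeasurableSet A →
    ((∀ Q : ℕ → Measure Ω, ApproxSep Ps W Kc Q → ∀ n : ℕ, 1 ≤ n → Q n A = 0) ↔ Polar Ps A)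

/-- The superhedging-type functional `ρ_A`, with values in `EReal` and the
convention `inf ∅ = +∞`. -/
noncomputable def rho (A : Set (Ω → ℝ)) (X : Ω → ℝ) : EReal :=
  sInf {y : EReal | ∃ x : ℝ, y = (x : EReal) ∧ (fun ω => X ω - x) ∈ A}

end Paper

namespace Paper

section Helpers
variable {Ω : Type*} [MeasurableSpace Ω]

lemma Polar.mono {Ps : Set (Measure Ω)} {M N : Set Ω} (h : Polar Ps N) (hMN : M ⊆ N) :
    Polar Ps M := by
  obtain ⟨N', h1, h2, h3⟩ := h
  exact ⟨N', h1, hMN.trans h2, h3⟩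

lemma Polar.union {Ps : Set (Measure Ω)} {M N : Set Ω} (h : Polar Ps M) (h' : Polar Ps N) :
    Polar Ps (M ∪ N) := by
  obtain ⟨M', h1, h2, h3⟩ := h
  obtain ⟨N', h1', h2', h3'⟩ := h'
  exact ⟨M' ∪ N', h1.union h1', Set.union_subset_union h2 h2',
    fun P hP => measure_union_null (h3 P hP) (h3' P hP)⟩

lemma Polar.iUnion {Ps : Set (Measure Ω)} {N : ℕ → Set Ω} (h : ∀ n, Polar Ps (N n)) :
    Polar Ps (⋃ n, N n) := by
  choose N' h1 h2 h3 using h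
  exact ⟨⋃ n, N' n, MeasurableSet.iUnion h1, Set.iUnion_mono h2,
    fun P hP => measure_iUnion_null fun n => h3 n P hP⟩

lemma Polar.of_forall {Ps : Set (Measure Ω)} {p : Ω → Prop} (h : ∀ ω, ¬ p ω) :
    Polar Ps {ω | p ω} :=
  ⟨∅, MeasurableSet.empty, fun ω hω => (h ω hω).elim, fun P _ => by simp⟩

lemma memLW_of_bound {Ps : Set (Measure Ω)} {W X : Ω → ℝ} (hX : Measurable X) {m : ℝ}
    (hm : 0 ≤ m) (h : ∀ ω, |X ω| ≤ m * W ω) : MemLW Ps W X :=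
  ⟨hX, m, hm, Polar.of_forall fun ω => not_lt.2 (h ω)⟩

lemma memLW_of_bdd {Ps : Set (Measure Ω)} {W X : Ω → ℝ} (hW1 : ∀ ω, 1 ≤ W ω)
    (hX : BddMeas X) : MemLW Ps W X := by
  obtain ⟨h1, c, hc⟩ := hX
  refine memLW_of_bound h1 (abs_nonneg c) fun ω => (hc ω).trans ?_
  nlinarith [le_abs_self c, abs_nonneg c, hW1 ω]

lemma rho_le_zero_of_mem {A : Set (Ω → ℝ)} {X : Ω → ℝ} (h : X ∈ A) : rho A X ≤ 0 :=
  sInf_le ⟨0, by simp, by simpa using h⟩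

lemma tilde_of_rho (Ps : Set (Measure Ω))
    (W : Ω → ℝ) (hWmeas : Measurable W) (hW1 : ∀ ω, 1 ≤ W ω)
    (Kc : Set (Ω → ℝ)) (hKc : IsConvexCone Kc)
    (hFatou : FatouClosed Ps W (coneC Ps W Kc)) (l : ℝ) (hl : 0 ≤ l) (ξ : Ω → ℝ)
    (hξ : BddMeas ξ) (hξ0 : LeQS Ps (fun _ => 0) ξ)
    (hr : rho (coneCTildeLam Ps W Kc l) ξ ≤ 0) : ξ ∈ coneCTildeLam Ps W Kc l := by
  refine ⟨memLW_of_bdd hW1 hξ, fun P hP => ?_⟩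
  have step : ∀ n : ℕ, ∃ k ∈ Klam Ps W Kc l, ∀ᵐ ω ∂P, ξ ω - 1 / ((n : ℝ) + 1) ≤ k ω := by
    intro n
    have hpos : (0 : ℝ) < 1 / ((n : ℝ) + 1) := by positivity
    have hlt : rho (coneCTildeLam Ps W Kc l) ξ < ((1 / ((n : ℝ) + 1) : ℝ) : EReal) :=
      lt_of_le_of_lt hr (by exact_mod_cast hpos)
    obtain ⟨y, ⟨x, rfl, hx⟩, hxy⟩ := sInf_lt_iff.1 hlt
    have hxn : x < 1 / ((n : ℝ) + 1) := by exact_mod_cast hxy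
    obtain ⟨k, hk, hk'⟩ := hx.2 P hP
    refine ⟨k, hk, ?_⟩
    filter_upwards [hk'] with ω hω
    linarith
  choose k hk hkP using step
  set A : Set Ω := ⋂ n : ℕ, {ω | ξ ω - 1 / ((n : ℝ) + 1) ≤ k n ω} with hA
  have hAm : MeasurableSet A := MeasurableSet.iInter fun n =>
    measurableSet_le (hξ.1.sub_const _) (hKc.1 _ (hk n).1)
  have hAP : ∀ᵐ ω ∂P, ω ∈ A := by
    filter_upwards [ae_all_iff.2 hkP] with ω hω
    exact Set.mem_iInter.2 hω
  classical
  obtain ⟨hξm, c, hc⟩ := hξ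
  have hbd : ∀ (x : ℝ), 0 ≤ x → x ≤ 1 → ∀ ω,
      |(if ω ∈ A then ξ ω - x else -l * W ω)| ≤ (|c| + 1 + l) * W ω := by
    intro x hx0 hx1 ω
    have h1 := hW1 ω
    have h2 := abs_le.1 (hc ω)
    have h3 := le_abs_self c
    have h4 : 0 ≤ |c| := abs_nonneg c
    have h5 : (|c| + 1) * 1 ≤ (|c| + 1) * W ω := by gcongr
    have h6 : 0 ≤ l * W ω := by positivity
    split_ifs
    · rw [abs_le]; constructor <;> nlinarith
    · rw [abs_le]; constructor <;> nlinarith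
  have hmeas : ∀ x : ℝ, Measurable fun ω => if ω ∈ A then ξ ω - x else -l * W ω := fun x =>
    Measurable.ite hAm (hξm.sub_const _) (hWmeas.const_mul _)
  have hm0 : 0 ≤ |c| + 1 + l := by positivity
  have hn1 : ∀ n : ℕ, 1 / ((n : ℝ) + 1) ≤ 1 := fun n => by
    rw [div_le_one (by positivity)]
    have : (0 : ℝ) ≤ n := n.cast_nonneg
    linarith
  have hZ : (fun ω => if ω ∈ A then ξ ω - 0 else -l * W ω) ∈ coneC Ps W Kc := by
    refine hFatou (fun n ω => if ω ∈ A then ξ ω - 1 / ((n : ℝ) + 1) else -l * W ω) ?_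
      ⟨|c| + 1 + l, fun n => ⟨hm0, Polar.of_forall fun ω =>
        not_lt.2 (hbd _ (by positivity) (hn1 n) ω)⟩⟩ _
      (memLW_of_bound (hmeas 0) hm0 (hbd 0 le_rfl zero_le_one)) ?_
    · intro n
      refine ⟨memLW_of_bound (hmeas _) hm0 (hbd _ (by positivity) (hn1 n)), k n, (hk n).1,
        (hk n).2.mono ?_⟩
      intro ω hω hle
      apply hω
      by_cases hωA : ω ∈ A
      · simpa [hωA] using Set.mem_iInter.1 hωA n
      · simpa [hωA] using hle
    · refine Polar.of_forall fun ω => not_not.2 ?_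
      by_cases hωA : ω ∈ A
      · simp only [hωA, if_true]
        exact tendsto_const_nhds.sub tendsto_one_div_add_atTop_nhds_zero_nat
      · simp only [hωA, if_false]
        exact tendsto_const_nhds
  obtain ⟨_, k', hk', hle⟩ := hZ
  refine ⟨k', ⟨hk', (hle.union hξ0).mono ?_⟩, ?_⟩
  · intro ω hω
    by_contra hcon
    simp only [Set.mem_union, Set.mem_setOf_eq, not_or, not_not] at hcon hω
    obtain ⟨h1, h2⟩ := hcon
    apply hω
    have h6 : 0 ≤ l * W ω := mul_nonneg hl (zero_le_one.trans (hW1 ω))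
    by_cases hωA : ω ∈ A
    · simp only [hωA, if_true] at h1
      linarith
    · simpa only [hωA, if_false] using h1
  · obtain ⟨N, _, hN2, hN3⟩ := hle
    have hNP : ∀ᵐ ω ∂P, ω ∉ N := measure_eq_zero_iff_ae_notMem.1 (hN3 P hP)
    filter_upwards [hAP, hNP] with ω h1 h2
    have h3 := fun h => h2 (hN2 h)
    simp only [Set.mem_setOf_eq, not_not, h1, if_true, sub_zero] at h3
    exact not_not.1 h3

end Helpers

/-- **Lemma (`strict:positive1`).** Assume `𝒞` is Fatou closed. Then sNABR
(every nonnegative bounded claim in some `𝒞̃_λ` vanishes q.s.) is equivalent to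
strict positivity of `ρ_{𝒞̃_λ}` on nonzero nonnegative bounded claims for all
`λ ≥ 0`, and to strict positivity of `ρ_{𝒞̃_λ}` on indicators of non-polar
events for all `λ ≥ 0`. -/
theorem sNABR_iff_rho_pos {Ω : Type*} [MeasurableSpace Ω]
    (Ps : Set (Measure Ω)) (hPsne : Ps.Nonempty)
    (hPsprob : ∀ P ∈ Ps, IsProbabilityMeasure P)
    (W : Ω → ℝ) (hWmeas : Measurable W) (hW1 : ∀ ω, 1 ≤ W ω)
    (Kc : Set (Ω → ℝ)) (hKc : IsConvexCone Kc)
    (hFatou : FatouClosed Ps W (coneC Ps W Kc)) :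
    ((∀ X : Ω → ℝ, BddMeas X → LeQS Ps (fun _ => 0) X →
        (∃ l : ℝ, 0 ≤ l ∧ X ∈ coneCTildeLam Ps W Kc l) → EqQS Ps X (fun _ => 0)) ↔
      (∀ l : ℝ, 0 ≤ l →
        ∀ ξ : Ω → ℝ, BddMeas ξ → LeQS Ps (fun _ => 0) ξ → ¬ EqQS Ps ξ (fun _ => 0) →
          (0 : EReal) < rho (coneCTildeLam Ps W Kc l) ξ)) ∧
    ((∀ l : ℝ, 0 ≤ l →
        ∀ ξ : Ω → ℝ, BddMeas ξ → LeQS Ps (fun _ => 0) ξ → ¬ EqQS Ps ξ (fun _ => 0) →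
          (0 : EReal) < rho (coneCTildeLam Ps W Kc l) ξ) ↔
      (∀ l : ℝ, 0 ≤ l → ∀ A : Set Ω, MeasurableSet A → ¬ Polar Ps A →
        (0 : EReal) < rho (coneCTildeLam Ps W Kc l) (A.indicator fun _ => (1 : ℝ)))) := by
  have hab : (∀ X : Ω → ℝ, BddMeas X → LeQS Ps (fun _ => 0) X →
        (∃ l : ℝ, 0 ≤ l ∧ X ∈ coneCTildeLam Ps W Kc l) → EqQS Ps X (fun _ => 0)) →
      (∀ l : ℝ, 0 ≤ l →
        ∀ ξ : Ω → ℝ, BddMeas ξ → LeQS Ps (fun _ => 0) ξ → ¬ EqQS Ps ξ (fun _ => 0) →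
          (0 : EReal) < rho (coneCTildeLam Ps W Kc l) ξ) := by
    intro ha l hl ξ hξ hξ0 hne
    by_contra hr
    exact hne (ha ξ hξ hξ0 ⟨l, hl,
      tilde_of_rho Ps W hWmeas hW1 Kc hKc hFatou l hl ξ hξ hξ0 (not_lt.1 hr)⟩)
  refine ⟨⟨hab, ?_⟩, ?_, fun hc => hab ?_⟩
  · rintro hb X hX hX0 ⟨l, hl, hXl⟩
    by_contra hne
    exact absurd (hb l hl X hX hX0 hne) (not_lt.2 (rho_le_zero_of_mem hXl))
  · intro hb l hl A hA hAp
    refine hb l hl _ ⟨measurable_const.indicator hA, 1, fun ω => ?_⟩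
      (Polar.of_forall fun ω => not_not.2 ?_) fun h => hAp (h.mono fun ω hω => ?_)
    · by_cases h : ω ∈ A <;> simp [h]
    · exact Set.indicator_nonneg (fun _ _ => zero_le_one) ω
    · simp [hω]
  · rintro X hX hX0 ⟨l, hl, hXl⟩
    by_contra hne
    have hex : ∃ n : ℕ, ¬ Polar Ps {ω | 1 / ((n : ℝ) + 1) < X ω} := by
      by_contra hcon
      push Not at hcon
      refine hne ((hX0.union (Polar.iUnion hcon)).mono fun ω hω => ?_)
      by_cases h0 : 0 ≤ X ω
      · right
        have hpos : 0 < X ω := lt_of_le_of_ne h0 (Ne.symm hω)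
        obtain ⟨n, hn⟩ := exists_nat_one_div_lt hpos
        exact Set.mem_iUnion.2 ⟨n, hn⟩
      · left; exact h0
    obtain ⟨n, hn⟩ := hex
    have hn0 : (0 : ℝ) < (n : ℝ) + 1 := by positivity
    have hAm : MeasurableSet {ω | 1 / ((n : ℝ) + 1) < X ω} :=
      measurableSet_lt measurable_const hX.1
    refine absurd (hc (((n : ℝ) + 1) * l) (by positivity) _ hAm hn)
      (not_lt.2 (rho_le_zero_of_mem ⟨?_, fun P hP => ?_⟩))
    · refine memLW_of_bdd hW1 ⟨measurable_const.indicator hAm, 1, fun ω => ?_⟩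
      unfold Set.indicator
      split_ifs <;> simp
    · obtain ⟨k, hk, hkP⟩ := hXl.2 P hP
      refine ⟨fun ω => ((n : ℝ) + 1) * k ω, ⟨hKc.2.2.1 k hk.1 _ hn0.le,
        hk.2.mono fun ω hω hle => hω ?_⟩, ?_⟩
      · have := mul_le_mul_of_nonneg_left hle hn0.le
        simp only at this ⊢
        linarith
      · obtain ⟨N, _, hN2, hN3⟩ := hX0
        have hNP : ∀ᵐ ω ∂P, ω ∉ N := measure_eq_zero_iff_ae_notMem.1 (hN3 P hP)
        filter_upwards [hkP, hNP] with ω h1 h2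
        have h3 : 0 ≤ X ω := by
          by_contra h
          exact h2 (hN2 h)
        unfold Set.indicator
        split_ifs with h
        · have h' : 1 / ((n : ℝ) + 1) < X ω := h
          rw [div_lt_iff₀ hn0] at h'
          nlinarith
        · exact mul_nonneg hn0.le (h3.trans h1)

end Paper
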